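/- Let (X,d) be a metric space, θ ≥ 0, A ⊆ X, and let B be a θ-connected component of ρ_θ(A). Then B ∩ A ≠ ∅. Consequently, if A is finite, the number of θ-connected components of ρ_θ(A) is at most |A|. -/

import Mathlib

def WConvex {X : Type*} [MetricSpace X] (θ : ℝ) (A : Set X) : Prop :=
  ∀ x ∈ A, ∀ y ∈ A, dist x y ≤ θ → ∀ z : X, dist x z + dist z y = dist x y → z ∈ A

def WHull {X : Type*} [MetricSpace X] (θ : ℝ) (A : Set X) : Set X :=
  ⋂₀ {C : Set X | WConvex θ C ∧ A ⊆ C}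

def ThetaConn {X : Type*} [MetricSpace X] (θ : ℝ) (A : Set X) (a b : X) : Prop :=
  ∃ (r : ℕ) (p : ℕ → X), p 0 = a ∧ p r = b ∧ (∀ i ≤ r, p i ∈ A) ∧
    ∀ i < r, dist (p i) (p (i + 1)) ≤ θ

/-- The θ-connected component of `a` in `A`. -/
def ThetaComp {X : Type*} [MetricSpace X] (θ : ℝ) (A : Set X) (a : X) : Set X :=
  {b : X | b ∈ A ∧ ThetaConn θ A a b}

/-!
A point metrically between two points at distance at most `θ` is itself within `θ` of both, whereas
distinct `θ`-components are more than `θ` apart. So a `θ`-convex set stays `θ`-convex after one of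
its `θ`-components is removed. If a component of the hull of `A` missed `A`, removing it would
leave a smaller `θ`-convex set containing `A`, against minimality. Hence every component is the
component of a point of `A`.
-/

section

variable {X : Type*} [MetricSpace X] {θ : ℝ} {A C S T : Set X} {a b c x y : X}

theorem subset_wHull : A ⊆ WHull θ A :=
  Set.subset_sInter fun _ hC => hC.2

theorem wHull_subset (hC : WConvex θ C) (hAC : A ⊆ C) : WHull θ A ⊆ C :=
  Set.sInter_subset_of_mem ⟨hC, hAC⟩

theorem wConvex_sInter {𝒞 : Set (Set X)} (h𝒞 : ∀ C ∈ 𝒞, WConvex θ C) : WConvex θ (⋂₀ 𝒞) :=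
  fun x hx y hy hxy z hz C hC => h𝒞 C hC x (hx C hC) y (hy C hC) hxy z hz

theorem wConvex_wHull (θ : ℝ) (A : Set X) : WConvex θ (WHull θ A) :=
  wConvex_sInter fun _ hC => hC.1

theorem WConvex.diff_of_lt_dist (hS : WConvex θ S)
    (hST : ∀ x ∈ S \ T, ∀ z ∈ S ∩ T, θ < dist x z) : WConvex θ (S \ T) := by
  intro x hx y hy hxy z hz
  have hzS : z ∈ S := hS x hx.1 y hy.1 hxy z hz
  have hxz : dist x z ≤ θ := by linarith [dist_nonneg (x := z) (y := y)]
  exact ⟨hzS, fun hzT => (hST x hx z ⟨hzS, hzT⟩).not_ge hxz⟩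

namespace ThetaConn

theorem refl (θ : ℝ) (ha : a ∈ S) : ThetaConn θ S a a :=
  ⟨0, fun _ => a, rfl, rfl, fun _ _ => ha, fun i hi => absurd hi i.not_lt_zero⟩

theorem symm (hab : ThetaConn θ S a b) : ThetaConn θ S b a := by
  obtain ⟨r, p, rfl, rfl, hmem, hdist⟩ := hab
  refine ⟨r, fun i => p (r - i), by simp, by simp, fun i _ => hmem _ (r.sub_le i), fun i hi => ?_⟩
  have hsucc : r - (i + 1) + 1 = r - i := by omega
  have hstep : dist (p (r - (i + 1))) (p (r - (i + 1) + 1)) ≤ θ := hdist _ (by omega)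
  rwa [hsucc, dist_comm] at hstep

theorem cons (ha : a ∈ S) (hab : dist a b ≤ θ) (hbc : ThetaConn θ S b c) :
    ThetaConn θ S a c := by
  obtain ⟨r, p, rfl, rfl, hmem, hdist⟩ := hbc
  refine ⟨r + 1, fun | 0 => a | i + 1 => p i, rfl, rfl, ?_, ?_⟩
  · rintro (_ | i) hi
    exacts [ha, hmem i (Nat.le_of_succ_le_succ hi)]
  · rintro (_ | i) hi
    exacts [hab, hdist i (Nat.lt_of_succ_lt_succ hi)]

theorem trans (hab : ThetaConn θ S a b) (hbc : ThetaConn θ S b c) : ThetaConn θ S a c := by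
  obtain ⟨r, p, rfl, rfl, hmem, hdist⟩ := hab
  induction r generalizing p with
  | zero => exact hbc
  | succ r ih =>
    have htail : ThetaConn θ S (p 1) c :=
      ih (fun i => p (i + 1)) hbc (fun i hi => hmem (i + 1) (Nat.succ_le_succ hi))
        fun i hi => hdist (i + 1) (Nat.succ_lt_succ hi)
    exact cons (hmem 0 (Nat.zero_le _)) (hdist 0 r.succ_pos) htail

end ThetaConn

theorem self_mem_thetaComp (θ : ℝ) (ha : a ∈ S) : a ∈ ThetaComp θ S a :=
  ⟨ha, .refl θ ha⟩

theorem thetaComp_eq_of_mem (hb : b ∈ ThetaComp θ S a) : ThetaComp θ S b = ThetaComp θ S a :=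
  Set.ext fun _ => and_congr_right fun _ => ⟨hb.2.trans, hb.2.symm.trans⟩

theorem lt_dist_of_mem_thetaComp (hx : x ∈ S \ ThetaComp θ S a) (hy : y ∈ ThetaComp θ S a) :
    θ < dist x y := by
  by_contra! hxy
  have hconn : ThetaConn θ S x a := .cons hx.1 hxy hy.2.symm
  exact hx.2 ⟨hx.1, hconn.symm⟩

theorem WConvex.diff_thetaComp (hS : WConvex θ S) (a : X) : WConvex θ (S \ ThetaComp θ S a) :=
  hS.diff_of_lt_dist fun _ hx _ hz => lt_dist_of_mem_thetaComp hx hz.2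

theorem thetaComp_wHull_inter_nonempty (ha : a ∈ WHull θ A) :
    (ThetaComp θ (WHull θ A) a ∩ A).Nonempty := by
  by_contra hmiss
  have hA : A ⊆ WHull θ A \ ThetaComp θ (WHull θ A) a :=
    fun x hx => ⟨subset_wHull hx, fun hxa => hmiss ⟨x, hxa, hx⟩⟩
  have ha' : a ∈ WHull θ A \ ThetaComp θ (WHull θ A) a :=
    wHull_subset ((wConvex_wHull θ A).diff_thetaComp a) hA ha
  exact ha'.2 (self_mem_thetaComp θ ha)

theorem thetaComps_subset_image (h : ∀ a ∈ S, (ThetaComp θ S a ∩ A).Nonempty) :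
    {T : Set X | ∃ a ∈ S, T = ThetaComp θ S a} ⊆ ThetaComp θ S '' A := by
  rintro _ ⟨a, ha, rfl⟩
  obtain ⟨b, hb, hbA⟩ := h a ha
  exact ⟨b, hbA, thetaComp_eq_of_mem hb⟩

end

theorem components_meet_and_card_general {X : Type*} [MetricSpace X] (θ : ℝ) (A : Set X) :
    (∀ a ∈ WHull θ A, (ThetaComp θ (WHull θ A) a ∩ A).Nonempty) ∧
    Cardinal.mk {S : Set X | ∃ a ∈ WHull θ A, S = ThetaComp θ (WHull θ A) a} ≤
      Cardinal.mk A :=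
  have hmeet : ∀ a ∈ WHull θ A, (ThetaComp θ (WHull θ A) a ∩ A).Nonempty :=
    fun _ => thetaComp_wHull_inter_nonempty
  ⟨hmeet, (Cardinal.mk_le_mk_of_subset (thetaComps_subset_image hmeet)).trans Cardinal.mk_image_le⟩

theorem components_meet_and_card {X : Type*} [MetricSpace X] (θ : ℝ) (hθ : 0 ≤ θ)
    (A : Set X) :
    (∀ a ∈ WHull θ A, (ThetaComp θ (WHull θ A) a ∩ A).Nonempty) ∧
    (A.Finite →
      {S : Set X | ∃ a ∈ WHull θ A, S = ThetaComp θ (WHull θ A) a}.ncard ≤ A.ncard) := by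
  obtain ⟨hmeet, hcard⟩ := components_meet_and_card_general θ A
  exact ⟨hmeet, fun hA => Cardinal.toNat_le_toNat hcard hA.lt_aleph0⟩
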